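/- Suppose the graph sequence {𝔾(t)} of the column stochastic matrix sequence {W(t)} is uniformly strongly connected. Let y(t+1) = W(t) y(t), y(0) = 𝟙, and S(t)_{ij} = W(t)_{ij} y_j(t) / y_i(t+1). Then there exists a constant γ > 0 such that for all i, j ∈ {1,…,n} and all t ≥ 0: S(t)_{ii} ≥ γ; S(t)_{ij} ≥ γ whenever S(t)_{ij} > 0; and Σ_{j=1}^n S(t)_{ij} = 1 (each S(t) is row stochastic). -/

import Mathlib

open Filter Finset
open scoped InnerProductSpace

/-!
The total mass `∑ i, y t i` is conserved, so at every time some node carries at least the smallest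
initial value `c`, and no node ever carries more than the total initial mass. The head of an arc
receives at least the fraction `β` of the value at its tail, so the set of nodes whose value at time
`t + s` is at least `β ^ s * c` never shrinks in `s` (by the self-arcs), and by strong connectivity
it gains a node over each window of length `L` until it contains all of them. After `card ι - 1`
windows every node has value at least `β ^ ((card ι - 1) * L) * c`, uniformly in `t`. Together with
the upper bound this controls the ratios `W t i j * y t j / y (t + 1) i`.
-/

/-- The arcs of the union, over the times `t, …, t + L - 1`, of a time-varying directed graph, where
`r k u v` means that the graph at time `k` has an arc from `u` to `v`. -/
def UnionArc {ι : Type*} (r : ℕ → ι → ι → Prop) (L t : ℕ) (u v : ι) : Prop :=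
  ∃ k ∈ Ico t (t + L), r k u v

/-- Uniform strong connectivity of a time-varying directed graph, with window length `L`: its union
over any `L` consecutive times is strongly connected. A node counts as reachable from itself. -/
def UniformlyStronglyConnected {ι : Type*} (r : ℕ → ι → ι → Prop) (L : ℕ) : Prop :=
  ∀ t u v, Relation.ReflTransGen (UnionArc r L t) u v

/-- The arcs of the directed graph of a matrix: row indices are heads and column indices tails. -/
def MatrixArc {ι K : Type*} [Zero K] [LT K] (A : Matrix ι ι K) (u v : ι) : Prop :=
  0 < A v u

/-- The nodes whose value at time `s` is at least `β ^ s * c`. It tracks how far a mass `c` placed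
at time `0` spreads when each arc transmits at least the fraction `β` of the value at its tail. -/
def heavySet {ι K : Type*} [Fintype ι] [Semiring K] [LinearOrder K] (y : ℕ → ι → K) (β c : K)
    (s : ℕ) : Finset ι :=
  {i | β ^ s * c ≤ y s i}

theorem UniformlyStronglyConnected.shift {ι : Type*} {r : ℕ → ι → ι → Prop} {L : ℕ}
    (h : UniformlyStronglyConnected r L) (t : ℕ) :
    UniformlyStronglyConnected (fun s => r (t + s)) L := by
  intro s u v
  refine Relation.ReflTransGen.mono (fun a b ⟨k, hk, hab⟩ => ?_) _ _ (h (t + s) u v)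
  obtain ⟨hle, hlt⟩ := mem_Ico.1 hk
  obtain ⟨d, rfl⟩ := Nat.exists_eq_add_of_le (le_of_add_le_left hle)
  exact ⟨d, mem_Ico.2 (by omega), hab⟩

theorem exists_rel_mem_notMem_of_reflTransGen {α : Type*} {r : α → α → Prop} {s : Set α} {a b : α}
    (h : Relation.ReflTransGen r a b) (ha : a ∈ s) (hb : b ∉ s) : ∃ u ∈ s, ∃ v ∉ s, r u v := by
  by_contra! hclosed
  induction h with
  | refl => exact hb ha
  | tail _ hr ih => exact ih fun hu => hclosed _ hu _ hb hr

theorem eq_univ_of_monotone_of_ssubset_succ {α : Type*} [Fintype α] {f : ℕ → Finset α}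
    (h₀ : (f 0).Nonempty) (hf : Monotone f) (hlt : ∀ m, f m ≠ univ → f m ⊂ f (m + 1)) :
    f (Fintype.card α - 1) = univ := by
  by_contra hne
  have not_full : ∀ m ≤ Fintype.card α - 1, f m ≠ univ := fun m hm hfull =>
    hne (univ_subset_iff.1 (hfull ▸ hf hm))
  have card_gt : ∀ m ≤ Fintype.card α - 1, m < #(f m) := by
    intro m
    induction m with
    | zero => exact fun _ => h₀.card_pos
    | succ m ih =>
      intro hm
      have hm' := Nat.le_of_succ_le hm
      exact (Nat.succ_le_of_lt (ih hm')).trans_lt (card_lt_card (hlt m (not_full m hm')))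
  have := card_gt _ le_rfl
  have := (card_lt_iff_ne_univ _).2 hne
  omega

section HeavySet

variable {ι K : Type*} [Fintype ι] [Semiring K] [LinearOrder K] {r : ℕ → ι → ι → Prop} {L : ℕ}
  {y : ℕ → ι → K} {β c : K}

theorem mem_heavySet {s : ℕ} {i : ι} : i ∈ heavySet y β c s ↔ β ^ s * c ≤ y s i := by
  simp [heavySet]

variable [IsOrderedRing K]

theorem mem_heavySet_succ (hβ : 0 ≤ β) {s : ℕ} {i j : ι} (hji : β * y s j ≤ y (s + 1) i)
    (hj : j ∈ heavySet y β c s) : i ∈ heavySet y β c (s + 1) := by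
  rw [mem_heavySet] at hj ⊢
  calc β ^ (s + 1) * c = β * (β ^ s * c) := by rw [pow_succ', mul_assoc]
    _ ≤ β * y s j := mul_le_mul_of_nonneg_left hj hβ
    _ ≤ y (s + 1) i := hji

theorem monotone_heavySet (hβ : 0 ≤ β) (hself : ∀ s i, β * y s i ≤ y (s + 1) i) :
    Monotone (heavySet y β c) :=
  monotone_nat_of_le_succ fun s i => mem_heavySet_succ hβ (hself s i)

theorem UniformlyStronglyConnected.heavySet_ssubset_add (hβ : 0 ≤ β) (hrefl : ∀ s i, r s i i)
    (hconn : UniformlyStronglyConnected r L) (hstep : ∀ s i j, r s j i → β * y s j ≤ y (s + 1) i)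
    {s : ℕ} (hs : (heavySet y β c s).Nonempty) (hs' : heavySet y β c s ≠ univ) :
    heavySet y β c s ⊂ heavySet y β c (s + L) := by
  have hmono : Monotone (heavySet y β c) :=
    monotone_heavySet hβ fun s i => hstep s i i (hrefl s i)
  obtain ⟨a, ha⟩ := hs
  obtain ⟨b, hb⟩ : ∃ b, b ∉ heavySet y β c s := by simpa [eq_univ_iff_forall] using hs'
  obtain ⟨u, hu, v, hv, k, hk, huv⟩ :=
    exists_rel_mem_notMem_of_reflTransGen (s := heavySet y β c s) (hconn s a b) ha hb
  obtain ⟨hsk, hkL⟩ := mem_Ico.1 hk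
  have hv' : v ∈ heavySet y β c (k + 1) := mem_heavySet_succ hβ (hstep k v u huv) (hmono hsk hu)
  exact (ssubset_iff_of_subset (hmono le_self_add)).2 ⟨v, hmono hkL hv', hv⟩

theorem UniformlyStronglyConnected.pow_mul_le_of_le_zero (hβ : 0 ≤ β) (hrefl : ∀ s i, r s i i)
    (hconn : UniformlyStronglyConnected r L) (hstep : ∀ s i j, r s j i → β * y s j ≤ y (s + 1) i)
    {j : ι} (hj : c ≤ y 0 j) (i : ι) :
    β ^ ((Fintype.card ι - 1) * L) * c ≤ y ((Fintype.card ι - 1) * L) i := by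
  have hmono : Monotone (heavySet y β c) :=
    monotone_heavySet hβ fun s i => hstep s i i (hrefl s i)
  have hj₀ : j ∈ heavySet y β c 0 := mem_heavySet.2 (by simpa using hj)
  have hfull : heavySet y β c ((Fintype.card ι - 1) * L) = univ := by
    refine eq_univ_of_monotone_of_ssubset_succ (f := fun m => heavySet y β c (m * L))
      ⟨j, by simpa using hj₀⟩ (fun a b hab => hmono (Nat.mul_le_mul_right L hab)) fun m hm => ?_
    simpa only [Nat.succ_mul] using
      hconn.heavySet_ssubset_add hβ hrefl hstep ⟨j, hmono (Nat.zero_le _) hj₀⟩ hm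
  exact mem_heavySet.1 (hfull ▸ mem_univ i)

end HeavySet

theorem UniformlyStronglyConnected.pow_mul_le_of_sum_le {ι K : Type*} [Fintype ι] [Semiring K]
    [LinearOrder K] [IsStrictOrderedRing K] {r : ℕ → ι → ι → Prop} {L : ℕ} {y : ℕ → ι → K} {β c : K}
    (hβ : 0 ≤ β) (hβ₁ : β ≤ 1) (hrefl : ∀ t i, r t i i) (hconn : UniformlyStronglyConnected r L)
    (hstep : ∀ t i j, r t j i → β * y t j ≤ y (t + 1) i) (hc : 0 ≤ c) (hy₀ : ∀ i, c ≤ y 0 i)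
    (hsum : ∀ t, ∑ i, y 0 i ≤ ∑ i, y t i) (t : ℕ) (i : ι) :
    β ^ ((Fintype.card ι - 1) * L) * c ≤ y t i := by
  set T := (Fintype.card ι - 1) * L
  rcases le_total t T with htT | hTt
  · have hi : i ∈ heavySet y β c t := monotone_heavySet hβ (fun s i => hstep s i i (hrefl s i))
      (Nat.zero_le t) (mem_heavySet.2 (by simpa using hy₀ i))
    exact (mul_le_mul_of_nonneg_right (pow_le_pow_of_le_one hβ hβ₁ htT) hc).trans
      (mem_heavySet.1 hi)
  · obtain ⟨t₀, rfl⟩ := Nat.exists_eq_add_of_le' hTt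
    obtain ⟨j, -, hj⟩ : ∃ j ∈ univ, c ≤ y t₀ j :=
      exists_le_of_sum_le ⟨i, mem_univ i⟩ ((sum_le_sum fun i _ => hy₀ i).trans (hsum t₀))
    exact (hconn.shift t₀).pow_mul_le_of_le_zero (y := fun s => y (t₀ + s)) hβ
      (fun s => hrefl (t₀ + s)) (fun s => hstep (t₀ + s)) hj i

section Matrix

open scoped Matrix

variable {ι : Type*} [Fintype ι]

theorem mul_le_mulVec {K : Type*} [Semiring K] [PartialOrder K] [IsOrderedRing K]
    {A : Matrix ι ι K} {x : ι → K} {β : K} {i j : ι} (hA : ∀ j, 0 ≤ A i j) (hx : ∀ j, 0 ≤ x j)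
    (hβ : β ≤ A i j) : β * x j ≤ (A *ᵥ x) i :=
  calc β * x j ≤ A i j * x j := mul_le_mul_of_nonneg_right hβ (hx j)
    _ ≤ ∑ k, A i k * x k :=
      single_le_sum (f := fun k => A i k * x k) (fun k _ => mul_nonneg (hA k) (hx k)) (mem_univ j)

section ColStochastic

variable [DecidableEq ι] {K : Type*} [Semiring K] [PartialOrder K] [IsOrderedRing K]
  {W : ℕ → Matrix ι ι K} {y : ℕ → ι → K}

theorem nonneg_of_forall_eq_mulVec (hW : ∀ t, W t ∈ Matrix.colStochastic K ι)
    (hy₀ : ∀ i, 0 ≤ y 0 i) (hy : ∀ t, y (t + 1) = W t *ᵥ y t) (t : ℕ) : ∀ i, 0 ≤ y t i := by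
  induction t with
  | zero => exact hy₀
  | succ t ih => exact hy t ▸ Matrix.nonneg_mulVec_of_mem_colStochastic (hW t) ih

theorem sum_eq_of_forall_eq_mulVec (hW : ∀ t, W t ∈ Matrix.colStochastic K ι)
    (hy : ∀ t, y (t + 1) = W t *ᵥ y t) (t : ℕ) : ∑ i, y t i = ∑ i, y 0 i := by
  induction t with
  | zero => rfl
  | succ t ih => rw [hy, Matrix.sum_mulVec_of_mem_colStochastic (hW t), ih]

end ColStochastic

theorem UniformlyStronglyConnected.exists_pos_forall_le_of_mulVec [Nonempty ι] [DecidableEq ι]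
    {K : Type*} [Semiring K] [LinearOrder K] [IsStrictOrderedRing K] {W : ℕ → Matrix ι ι K}
    {β : K} {L : ℕ} {y : ℕ → ι → K} (hW : ∀ t, W t ∈ Matrix.colStochastic K ι)
    (hdiag : ∀ t i, 0 < W t i i) (hβ : 0 < β) (hWβ : ∀ t i j, 0 < W t i j → β ≤ W t i j)
    (hconn : UniformlyStronglyConnected (fun t => MatrixArc (W t)) L) (hy₀ : ∀ i, 0 < y 0 i)
    (hy : ∀ t, y (t + 1) = W t *ᵥ y t) : ∃ c, 0 < c ∧ ∀ t i, c ≤ y t i := by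
  obtain ⟨i₀, hi₀⟩ := Finite.exists_min (y 0)
  have hβ₁ : β ≤ 1 :=
    (hWβ 0 i₀ i₀ (hdiag 0 i₀)).trans (Matrix.le_one_of_mem_colStochastic (hW 0))
  have hnonneg := nonneg_of_forall_eq_mulVec hW (fun i => (hy₀ i).le) hy
  have hstep : ∀ t i j, MatrixArc (W t) j i → β * y t j ≤ y (t + 1) i := fun t i j hij =>
    hy t ▸ mul_le_mulVec (fun _ => Matrix.nonneg_of_mem_colStochastic (hW t)) (hnonneg t)
      (hWβ t i j hij)
  exact ⟨β ^ ((Fintype.card ι - 1) * L) * y 0 i₀, mul_pos (pow_pos hβ _) (hy₀ i₀),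
    hconn.pow_mul_le_of_sum_le hβ.le hβ₁ hdiag hstep (hy₀ i₀).le hi₀
      fun t => (sum_eq_of_forall_eq_mulVec hW hy t).ge⟩

theorem stmt_15_general {ι K : Type*} [Fintype ι] [Nonempty ι] [DecidableEq ι] [Field K]
    [LinearOrder K] [IsStrictOrderedRing K] {W : ℕ → Matrix ι ι K} {β : K} {L : ℕ}
    {y : ℕ → ι → K} {S : ℕ → Matrix ι ι K} (hW : ∀ t, W t ∈ Matrix.colStochastic K ι)
    (hdiag : ∀ t i, 0 < W t i i) (hβ : 0 < β) (hWβ : ∀ t i j, 0 < W t i j → β ≤ W t i j)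
    (hconn : UniformlyStronglyConnected (fun t => MatrixArc (W t)) L) (hy₀ : ∀ i, 0 < y 0 i)
    (hy : ∀ t, y (t + 1) = W t *ᵥ y t) (hS : ∀ t i j, S t i j = W t i j * y t j / y (t + 1) i) :
    ∃ γ : K, 0 < γ ∧ (∀ t i, γ ≤ S t i i) ∧ (∀ t i j, 0 < S t i j → γ ≤ S t i j) ∧
      ∀ t i, ∑ j, S t i j = 1 := by
  obtain ⟨c, hc, hcy⟩ := hconn.exists_pos_forall_le_of_mulVec hW hdiag hβ hWβ hy₀ hy
  have hypos : ∀ t i, 0 < y t i := fun t i => hc.trans_le (hcy t i)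
  have hyM : ∀ t i, y t i ≤ ∑ k, y 0 k := fun t i =>
    sum_eq_of_forall_eq_mulVec hW hy t ▸
      single_le_sum (fun k _ => (hypos t k).le) (mem_univ i)
  have hSγ : ∀ t i j, 0 < W t i j → β * c / ∑ k, y 0 k ≤ S t i j := fun t i j hij => by
    rw [hS]
    exact div_le_div₀ (mul_pos hij (hypos t j)).le
      (mul_le_mul (hWβ t i j hij) (hcy t j) hc.le hij.le) (hypos _ i) (hyM _ i)
  have hWpos : ∀ t i j, 0 < S t i j → 0 < W t i j := fun t i j hij => by
    rwa [hS, div_pos_iff_of_pos_right (hypos _ i), mul_pos_iff_of_pos_right (hypos t j)] at hij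
  have hsum₀ : 0 < ∑ k, y 0 k := sum_pos (fun k _ => hy₀ k) univ_nonempty
  refine ⟨β * c / ∑ k, y 0 k, div_pos (mul_pos hβ hc) hsum₀, fun t i => hSγ t i i (hdiag t i),
    fun t i j hij => hSγ t i j (hWpos t i j hij), fun t i => ?_⟩
  calc ∑ j, S t i j = (W t *ᵥ y t) i / y (t + 1) i := by
        simp only [hS, ← sum_div, Matrix.mulVec, dotProduct]
    _ = 1 := by rw [← hy, div_self (hypos (t + 1) i).ne']

end Matrix

theorem stmt_15
    (n : ℕ) (hn : 0 < n)
    (W : ℕ → Matrix (Fin n) (Fin n) ℝ)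
    (hWnonneg : ∀ t i j, 0 ≤ W t i j)
    (hWcol : ∀ t j, ∑ i, W t i j = 1)
    (hWdiag : ∀ t i, 0 < W t i i)
    (β : ℝ) (hβ : 0 < β)
    (hWβ : ∀ t i j, 0 < W t i j → β ≤ W t i j)
    (L : ℕ) (hL : 0 < L)
    (hUSC : ∀ t : ℕ, ∀ i j : Fin n,
      Relation.TransGen (fun u v : Fin n => ∃ k ∈ Finset.Ico t (t + L), 0 < W k v u) i j)
    (y : ℕ → Fin n → ℝ)
    (hy0 : ∀ i, y 0 i = 1)
    (hyrec : ∀ t i, y (t + 1) i = ∑ j, W t i j * y t j)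
    (S : ℕ → Matrix (Fin n) (Fin n) ℝ)
    (hS : ∀ t i j, S t i j = W t i j * y t j / y (t + 1) i)
    :
    ∃ γ : ℝ, 0 < γ ∧
      (∀ t : ℕ, ∀ i : Fin n, γ ≤ S t i i) ∧
      (∀ t : ℕ, ∀ i j : Fin n, 0 < S t i j → γ ≤ S t i j) ∧
      (∀ t : ℕ, ∀ i : Fin n, ∑ j, S t i j = 1) := by
  have : Nonempty (Fin n) := Fin.pos_iff_nonempty.1 hn
  exact stmt_15_general (fun t => Matrix.mem_colStochastic_iff_sum.2 ⟨hWnonneg t, hWcol t⟩) hWdiag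
    hβ hWβ (fun t i j => (hUSC t i j).to_reflTransGen) (fun i => by simp [hy0])
    (fun t => funext (hyrec t)) hS
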